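/- arXiv:1704.03702 — 2 statements merged into one kernel-verified Lean document; each statement's English description precedes it below -/
import Mathlib

section
/- Let 𝕏 = {p_1,…,p_s} ⊆ ℙ^2_K be a set of s distinct K-rational points, none lying on Z(X_0). If 𝕏 has minimal Dedekind different, then the Dedekind different equals the Kähler different: δ_𝕏 = ϑ_𝕏. -/
noncomputable section

/-! An algebraic model for a 0-dimensional subscheme `𝕏 ⊆ ℙⁿ_K` whose support avoids
the hyperplane `Z(X₀)`.  The scheme is recorded through the local rings
`𝒪_{𝕏,p_j}` at the points `p_1, …, p_s` of its support, together with the germ map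
sending a homogeneous polynomial `F` of degree `i` to the tuple of germs
`(F_{p_1}, …, F_{p_s})`; this is the degree-`i` component of the injection
`ĩ : R → Q^h(R) ≅ ∏_j 𝒪_{𝕏,p_j}[T_j, T_j⁻¹]`, where every graded component of
`Q^h(R)` is identified with `Γ = ∏_j 𝒪_{𝕏,p_j}` by dropping the powers of the `T_j`.
Since `x₀` has germ `1` at every point, the homogeneous coordinate ring
`R = P/I_𝕏` is faithfully encoded by the chain of subspaces
`R_i ≅ V_i = germ(P_i) ⊆ Γ` (with `V_i ⊆ V_{i+1}`, and `V_i = Γ` for `i ≫ 0`). -/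

/-- The data of one (fat) point of a 0-dimensional scheme: a finite local `K`-algebra. -/
structure PointData (K : Type) [Field K] : Type 1 where
  carrier : Type
  [ring : CommRing carrier]
  [alg : Algebra K carrier]
  [loc : IsLocalRing carrier]
  [findim : FiniteDimensional K carrier]

attribute [instance] PointData.ring PointData.alg PointData.loc PointData.findim

/-- A model of a 0-dimensional subscheme of `ℙⁿ_K`, no point of whose support lies
on `Z(X₀)` (coordinates being chosen so that each point has `X₀`-coordinate 1, the
germ of `x₀` at every point is `1`). -/
structure ZeroDimScheme (K : Type) [Field K] (n : ℕ) : Type 1 where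
  /-- the number of points in the support -/
  s : ℕ
  spos : 0 < s
  /-- the local rings `𝒪_{𝕏,p_j}` -/
  pt : Fin s → PointData K
  /-- the germ map: for `F` homogeneous of degree `i` this is the degree-`i`
  component of `ĩ : R → Q^h(R)`, i.e. `F ↦ (F_{p_1}, …, F_{p_s})` -/
  germ : MvPolynomial (Fin (n + 1)) K →ₐ[K] ∀ j, (pt j).carrier
  /-- the germ of `X₀` at each point is `1` -/
  germ_X0 : germ (MvPolynomial.X 0) = 1
  /-- in all large degrees, the germ map is surjective onto `∏_j 𝒪_{𝕏,p_j}`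
  (this characterizes `I_𝕏` as the full homogeneous vanishing ideal of the scheme) -/
  eventually_surj : ∃ N : ℕ, ∀ i, N ≤ i →
    Submodule.map germ.toLinearMap
      (MvPolynomial.homogeneousSubmodule (Fin (n + 1)) K i) = ⊤

namespace ZeroDimScheme

variable {K : Type} [Field K] {n : ℕ}

/-- `Γ = ∏_j 𝒪_{𝕏,p_j}`, the common model for every graded component of `Q^h(R)`. -/
abbrev Gamma (S : ZeroDimScheme K n) : Type := ∀ j, (S.pt j).carrier

variable (S : ZeroDimScheme K n)

/-- `V i ⊆ Γ` is the image of the degree-`i` component `R_i` of the homogeneous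
coordinate ring `R` under (the degree-`i` component of) `ĩ`; we identify `R_i ≅ V i`. -/
def V (i : ℕ) : Submodule K S.Gamma :=
  Submodule.map S.germ.toLinearMap
    (MvPolynomial.homogeneousSubmodule (Fin (n + 1)) K i)

/-- `R_i` for `i : ℤ` (zero in negative degrees). -/
def Vz (i : ℤ) : Submodule K S.Gamma := if 0 ≤ i then S.V i.toNat else ⊥

/-- `deg 𝕏 = Σ_j dim_K 𝒪_{𝕏,p_j}`. -/
def degX : ℕ := Module.finrank K S.Gamma

/-- The Hilbert function `HF_𝕏(i) = dim_K R_i`. -/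
def HF (i : ℕ) : ℕ := Module.finrank K (S.V i)

/-- The Hilbert function on `ℤ`. -/
def HFz (i : ℤ) : ℕ := Module.finrank K (S.Vz i)

/-- The regularity index `r_𝕏`: the least `r` with `HF_𝕏(i) = deg 𝕏` for all `i ≥ r`. -/
def rX : ℕ := sInf {r : ℕ | ∀ i, r ≤ i → S.HF i = S.degX}

/-- `κ_j = dim_K κ(p_j)`, the residue field of `𝕏` at `p_j`. -/
def kappa (j : Fin S.s) : ℕ :=
  Module.finrank K
    ((S.pt j).carrier ⧸
      Submodule.restrictScalars K (IsLocalRing.maximalIdeal (S.pt j).carrier))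

/-- `sj` is a socle element of `𝒪_{𝕏,p_j}`, i.e. `sj ∈ Ann(𝔪_{𝕏,p_j})`.  By
Proposition 1.2, the maximal `p_j`-subschemes `𝕐 ⊆ 𝕏` correspond 1-1 to the ideals
of `Γ` generated by `(0,…,0,sj,0,…,0)` with `sj` a *nonzero* socle element. -/
def IsSocle (j : Fin S.s) (sj : (S.pt j).carrier) : Prop :=
  ∀ b ∈ IsLocalRing.maximalIdeal (S.pt j).carrier, sj * b = 0

/-- The ideal `U = ⟨(0,…,0,sj,0,…,0)⟩` of `Γ` corresponding to the maximal
`p_j`-subscheme `𝕐` determined by the socle element `sj`; one has `I_{𝕐/𝕏} = ĩ⁻¹(U)`. -/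
def sepIdeal (j : Fin S.s) (sj : (S.pt j).carrier) : Submodule K S.Gamma :=
  Submodule.restrictScalars K (Ideal.span {(Pi.single j sj : S.Gamma)})

/-- The degree-`i` component `(I_{𝕐/𝕏})_i = R_i ∩ ĩ⁻¹(U)` of the ideal of the maximal
`p_j`-subscheme `𝕐` (given by the socle element `sj`) in `R`. -/
def IY (j : Fin S.s) (sj : (S.pt j).carrier) (i : ℕ) : Submodule K S.Gamma :=
  S.V i ⊓ S.sepIdeal j sj

/-- `(I_{𝕐/𝕏})_i` for `i : ℤ`. -/
def IYz (j : Fin S.s) (sj : (S.pt j).carrier) (i : ℤ) : Submodule K S.Gamma :=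
  S.Vz i ⊓ S.sepIdeal j sj

/-- The Hilbert function `HF_𝕐(i) = HF_𝕏(i) - dim_K (I_{𝕐/𝕏})_i` of the maximal
`p_j`-subscheme `𝕐` given by the socle element `sj`. -/
def HFY (j : Fin S.s) (sj : (S.pt j).carrier) (i : ℕ) : ℕ :=
  S.HF i - Module.finrank K (S.IY j sj i)

/-- `HF_𝕐` on `ℤ`. -/
def HFYz (j : Fin S.s) (sj : (S.pt j).carrier) (i : ℤ) : ℕ :=
  S.HFz i - Module.finrank K (S.IYz j sj i)

/-- `α_{𝕐/𝕏} = min {i | (I_{𝕐/𝕏})_i ≠ 0}`. -/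
def alphaY (j : Fin S.s) (sj : (S.pt j).carrier) : ℕ :=
  sInf {i : ℕ | S.IY j sj i ≠ ⊥}

/-- `μ(a) = min {i | (0,…,0,a T_j^i,0,…,0) ∈ ĩ(R)}` for `a ∈ 𝒪_{𝕏,p_j}`. -/
def mu (j : Fin S.s) (a : (S.pt j).carrier) : ℕ :=
  sInf {i : ℕ | (Pi.single j a : S.Gamma) ∈ S.V i}

/-- `μ_{𝕐/𝕏}`, the maximal degree of a minimal separator of the maximal
`p_j`-subscheme `𝕐` given by the socle element `sj`; independently of all choices it
equals `max {μ(a·sj) | a ∈ 𝒪_{𝕏,p_j}, a·sj ≠ 0}`. -/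
def muY (j : Fin S.s) (sj : (S.pt j).carrier) : ℕ :=
  sSup {m : ℕ | ∃ a : (S.pt j).carrier, a * sj ≠ 0 ∧ m = S.mu j (a * sj)}

/-- `deg_𝕏(p_j) = min {μ_{𝕐/𝕏} | 𝕐 a maximal p_j-subscheme of 𝕏}`. -/
def degP (j : Fin S.s) : ℕ :=
  sInf {m : ℕ | ∃ sj : (S.pt j).carrier, S.IsSocle j sj ∧ sj ≠ 0 ∧ m = S.muY j sj}

/-- `𝕏` has the Cayley–Bacharach property of degree `d`: `deg_𝕏(p_j) ≥ d + 1` for all `j`. -/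
def CBP (d : ℕ) : Prop := ∀ j : Fin S.s, d + 1 ≤ S.degP j

/-- `𝕏` is a Cayley–Bacharach scheme: it has `CBP(r_𝕏 - 1)`. -/
def CayleyBacharach : Prop := S.CBP (S.rX - 1)

/-- The residue class map `𝒪_{𝕏,p_j} → κ(p_j)` as a `K`-linear map. -/
def resQ (j : Fin S.s) :
    (S.pt j).carrier →ₗ[K]
      ((S.pt j).carrier ⧸
        Submodule.restrictScalars K (IsLocalRing.maximalIdeal (S.pt j).carrier)) :=
  (Submodule.restrictScalars K (IsLocalRing.maximalIdeal (S.pt j).carrier)).mkQ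

/-- The residue classes of `e 0, …, e (κ_j - 1)` form a `K`-basis of `κ(p_j)`. -/
def IsResidueBasis (j : Fin S.s) {m : ℕ} (e : Fin m → (S.pt j).carrier) : Prop :=
  LinearIndependent K (fun k => S.resQ j (e k)) ∧
    Submodule.span K (Set.range fun k => S.resQ j (e k)) = ⊤

/-- A family `τ_j : 𝒪_{𝕏,p_j} → K` of trace maps: each `τ_j` is a generator of
`Hom_K(𝒪_{𝕏,p_j}, K)` as an `𝒪_{𝕏,p_j}`-module.  Such a family exists iff `𝕏` is
locally Gorenstein, and it induces a homogeneous trace map `σ` of degree zero of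
`Q^h(R)/L₀` (componentwise). -/
def IsTraceFamily (τ : ∀ j, (S.pt j).carrier →ₗ[K] K) : Prop :=
  ∀ j, Function.Bijective
    (fun a : (S.pt j).carrier => (τ j).comp (LinearMap.mulRight K a))

/-- The total trace `Γ → K`, `y ↦ Σ_j τ_j (y_j)`; on the degree-`i` component of
`Q^h(R)` the trace map `σ` is `q ↦ (Ttot τ q)·x₀^i`. -/
def Ttot (τ : ∀ j, (S.pt j).carrier →ₗ[K] K) : S.Gamma →ₗ[K] K :=
  ∑ j : Fin S.s, (τ j).comp (LinearMap.proj j)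

/-- The degree-`k` component `(𝔠^σ_𝕏)_k ⊆ Q^h(R)_k ≅ Γ` of the Dedekind complementary
module: `g ∈ (𝔠^σ_𝕏)_k` iff `σ(g · R) ⊆ K[x₀]`, i.e. `Ttot τ (g·x) = 0` whenever
`x ∈ R_i` with `k + i < 0`. -/
def Cmod (τ : ∀ j, (S.pt j).carrier →ₗ[K] K) (k : ℤ) : Submodule K S.Gamma :=
  ⨅ (i : ℕ) (_ : k + (i : ℤ) < 0) (x : S.Gamma) (_ : x ∈ S.V i),
    LinearMap.ker ((S.Ttot τ).comp (LinearMap.mulRight K x))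

/-- The degree-`i` component `(δ^σ_𝕏)_i ⊆ Q^h(R)_i ≅ Γ` of the Dedekind different
`δ^σ_𝕏 = {f ∈ Q^h(R) | f · 𝔠^σ_𝕏 ⊆ R}`. -/
def delta (τ : ∀ j, (S.pt j).carrier →ₗ[K] K) (i : ℤ) : Submodule K S.Gamma :=
  ⨅ (k : ℤ) (g : S.Gamma) (_ : g ∈ S.Cmod τ k),
    Submodule.comap (LinearMap.mulRight K g) (S.Vz (i + k))

/-- The Hilbert function of the Dedekind different. -/
def HFdelta (τ : ∀ j, (S.pt j).carrier →ₗ[K] K) (i : ℤ) : ℕ :=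
  Module.finrank K (S.delta τ i)

/-- `𝕏` has minimal Dedekind different: `δ^σ_𝕏 = ⊕_{i ≥ 2 r_𝕏} R_i`
(recall `R_i ≅ Γ` for `i ≥ r_𝕏`). -/
def MinimalDedekind (τ : ∀ j, (S.pt j).carrier →ₗ[K] K) : Prop :=
  ∀ i : ℤ, S.delta τ i = if 2 * (S.rX : ℤ) ≤ i then ⊤ else ⊥

/-- The degree-`i` component (`i ≥ 0`) of the conductor
`𝔉_{R̃/R} = {f ∈ R̃ | f·R̃ ⊆ R}` of `R` in `R̃ = ∏_j 𝒪_{𝕏,p_j}[T_j]`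
(whose degree-`i` component is all of `Γ` for every `i ≥ 0`). -/
def cond (i : ℕ) : Submodule K S.Gamma :=
  ⨅ y : S.Gamma, Submodule.comap (LinearMap.mulRight K y) (S.V i)

/-- The conductor on `ℤ` (zero in negative degrees, where `R̃` vanishes). -/
def condZ (i : ℤ) : Submodule K S.Gamma := if 0 ≤ i then S.cond i.toNat else ⊥

/-- The degree-`i` component of the trace `tr(𝔠^σ_𝕏) = δ^σ_𝕏 · 𝔠^σ_𝕏` of the
Dedekind complementary module. -/
def trC (τ : ∀ j, (S.pt j).carrier →ₗ[K] K) (i : ℤ) : Submodule K S.Gamma :=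
  ⨆ (a : ℤ) (b : ℤ) (_ : a + b = i), S.delta τ a * S.Cmod τ b

/-- `𝕏` is nearly Gorenstein: `𝔪 ⊆ tr(𝔠^σ_𝕏)`. -/
def NearlyGorenstein (τ : ∀ j, (S.pt j).carrier →ₗ[K] K) : Prop :=
  ∀ i : ℤ, 1 ≤ i → S.Vz i ≤ S.trC τ i

/-- `𝕏` is almost Gorenstein: there is an exact sequence of graded `R`-modules
`0 → R → 𝔠^σ_𝕏(-r_𝕏) → C → 0` with `𝔪·C = 0`.  A degree-zero graded injection
`R → 𝔠^σ_𝕏(-r_𝕏)` is multiplication by an element `g ∈ (𝔠^σ_𝕏)_{-r_𝕏}` with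
`Ann_R(g) = 0`, and `𝔪·C = 0` means `𝔪 · 𝔠^σ_𝕏(-r_𝕏) ⊆ g·R`. -/
def AlmostGorenstein (τ : ∀ j, (S.pt j).carrier →ₗ[K] K) : Prop :=
  ∃ g ∈ S.Cmod τ (-(S.rX : ℤ)),
    (∀ i : ℕ, ∀ x ∈ S.V i, x * g = 0 → x = 0) ∧
    (∀ a : ℕ, 1 ≤ a → ∀ x ∈ S.V a, ∀ k : ℤ, ∀ h ∈ S.Cmod τ k,
      x * h ∈ Submodule.map (LinearMap.mulRight K g) (S.Vz ((a : ℤ) + k + (S.rX : ℤ))))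

/-- `𝕏` is arithmetically Gorenstein, i.e. `R` is a Gorenstein ring; equivalently the
canonical module is free of rank one: `𝔠^σ_𝕏 = g·R` for some `g ∈ (𝔠^σ_𝕏)_{-r_𝕏}`. -/
def ArithGorenstein (τ : ∀ j, (S.pt j).carrier →ₗ[K] K) : Prop :=
  ∃ g ∈ S.Cmod τ (-(S.rX : ℤ)),
    ∀ k : ℤ, S.Cmod τ k = Submodule.map (LinearMap.mulRight K g) (S.Vz (k + (S.rX : ℤ)))

/-- `𝕏` is level: the socle of `R̄ = R/⟨x₀⟩` equals `R̄_{r_𝕏}`, i.e. no nonzero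
homogeneous element of `R̄` of degree `< r_𝕏` is annihilated by `𝔪̄` (recall
`R̄_i ≅ V i / V (i-1)` and `x₀`-multiplication preserves germs). -/
def Level : Prop :=
  ∀ i : ℕ, i < S.rX → ∀ x ∈ S.V i,
    (∀ a : ℕ, 1 ≤ a → ∀ y ∈ S.V a, x * y ∈ S.Vz ((i : ℤ) + (a : ℤ) - 1)) →
      x ∈ S.Vz ((i : ℤ) - 1)

/-- The subspace `{x ∈ Γ | x_k = 0 for k ≠ j}` of `Γ`: the degreewise model for the
ideal of the subscheme `𝕐_j ⊆ 𝕏` with `I_{𝕐_j} = ∩_{k ≠ j} I_k`. -/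
def Wj (j : Fin S.s) : Submodule K S.Gamma :=
  ⨅ (k : Fin S.s) (_ : k ≠ j),
    LinearMap.ker (LinearMap.proj k : S.Gamma →ₗ[K] (S.pt k).carrier)

/-- `(I_{𝕐_j/𝕏})_i` for the subscheme `𝕐_j` complementary to `p_j`. -/
def IW (j : Fin S.s) (i : ℕ) : Submodule K S.Gamma := S.V i ⊓ S.Wj j

/-- The Hilbert function of the subscheme `𝕐_j` complementary to `p_j`. -/
def HFW (j : Fin S.s) (i : ℕ) : ℕ := S.HF i - Module.finrank K (S.IW j i)

/-- `α_{𝕐_j/𝕏}` for the subscheme `𝕐_j` complementary to `p_j`. -/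
def alphaW (j : Fin S.s) : ℕ := sInf {i : ℕ | S.IW j i ≠ ⊥}

/-- The subspace `{x ∈ Γ | x_k = 0 for k ∉ {j₁, j₂}}` of `Γ`: the degreewise model for
the ideal in `R` of the subscheme of the reduced scheme `𝕏` complementary to `{p_{j₁}, p_{j₂}}`. -/
def Wpair (j1 j2 : Fin S.s) : Submodule K S.Gamma :=
  ⨅ (k : Fin S.s) (_ : k ≠ j1) (_ : k ≠ j2),
    LinearMap.ker (LinearMap.proj k : S.Gamma →ₗ[K] (S.pt k).carrier)

/-- The homogeneous vanishing ideal `I_𝕏 ⊆ P`. -/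
def IX : Ideal (MvPolynomial (Fin (n + 1)) K) :=
  Ideal.span {F | (∃ i : ℕ, F ∈ MvPolynomial.homogeneousSubmodule (Fin (n + 1)) K i) ∧
    S.germ F = 0}

/-- The `n×n`-minor (Jacobian determinant with respect to `X_1, …, X_n`) of an
`n`-tuple of polynomials. -/
def jacMinor (Fs : Fin n → MvPolynomial (Fin (n + 1)) K) : MvPolynomial (Fin (n + 1)) K :=
  Matrix.det (Matrix.of fun a b : Fin n => MvPolynomial.pderiv (Fin.succ b) (Fs a))

/-- The preimage in `P` of the Kähler different `ϑ_𝕏 ⊆ R`: the ideal generated by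
`I_𝕏` together with all `n×n` minors of the Jacobian matrix of elements of `I_𝕏`. -/
def KaehlerIdeal : Ideal (MvPolynomial (Fin (n + 1)) K) :=
  S.IX ⊔ Ideal.span {m | ∃ Fs : Fin n → MvPolynomial (Fin (n + 1)) K,
    (∀ a, Fs a ∈ S.IX) ∧ m = jacMinor Fs}

/-- The degree-`i` component of the Kähler different `ϑ_𝕏 ⊆ R`, viewed inside `Γ`. -/
def thetaPiece (i : ℕ) : Submodule K S.Gamma :=
  Submodule.map S.germ.toLinearMap
    (Submodule.restrictScalars K S.KaehlerIdeal ⊓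
      MvPolynomial.homogeneousSubmodule (Fin (n + 1)) K i)

end ZeroDimScheme

end

/-!
A polynomial `F` has divided differences `D_c(X, Y)` with `F(X) - F(Y) = ∑ (X_c - Y_c) D_c(X, Y)`.
For `F_1, …, F_n ∈ I_𝕏` the determinant of the matrix of divided differences, evaluated at a pair of
points of `𝕏`, vanishes off the diagonal, because the difference of the two points lies in the
kernel, and is the Jacobian minor on the diagonal. Hence multiplying `g ∈ 𝔠_𝕏` by the Jacobian minor
amounts to applying the trace form of `g` to the second set of variables of this determinant. Since
the trace form kills the monomials of too small degree, the result lies in `R`, so `ϑ_𝕏 ⊆ δ_𝕏`.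

Conversely, if `f ∈ R_{r_𝕏}` is `1` at `p_j` and `0` at the other points, the Jacobian minor of the
products of `f` with the linear forms `X_a - p_{j,a} X_0` has degree `n r_𝕏` and is again `1` at
`p_j` and `0` elsewhere, provided `n ≥ 2`. Hence `ϑ_𝕏` contains all of `R` in degrees `≥ n r_𝕏`,
which for `n = 2` is the minimal Dedekind different.
-/

open MvPolynomial

section Polynomials

attribute [local instance] MvPolynomial.gradedAlgebra

variable {σ R : Type*} [CommSemiring R]

lemma coe_decompose_homogeneousSubmodule (f : MvPolynomial σ R) (i : ℕ) :
    (DirectSum.decompose (homogeneousSubmodule σ R) f i : MvPolynomial σ R) =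
      homogeneousComponent i f :=
  decomposition.decompose'_apply f i

lemma homogeneousComponent_mul_eq_sum_antidiagonal (i : ℕ) (p q : MvPolynomial σ R) :
    homogeneousComponent i (p * q) =
      ∑ ab ∈ Finset.HasAntidiagonal.antidiagonal i,
        homogeneousComponent ab.1 p * homogeneousComponent ab.2 q := by
  simp only [← coe_decompose_homogeneousSubmodule, DirectSum.decompose_mul,
    DirectSum.coe_mul_apply_eq_sum_antidiagonal]

lemma homogeneousComponent_add_mul {a : ℕ} {p : MvPolynomial σ R} (hp : p.IsHomogeneous a)
    (d : ℕ) (q : MvPolynomial σ R) :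
    homogeneousComponent (a + d) (p * q) = p * homogeneousComponent d q := by
  simpa only [← coe_decompose_homogeneousSubmodule] using
    DirectSum.coe_decompose_mul_add_of_left_mem _ hp

lemma exists_monomial_eq_rename_inl_mul_rename_inr {ρ : Type*} (m : σ ⊕ ρ →₀ ℕ) (r : R) :
    ∃ (u : σ →₀ ℕ) (v : ρ →₀ ℕ), u.degree + v.degree = m.degree ∧
      monomial m r = rename Sum.inl (monomial u r) * rename Sum.inr (monomial v 1) := by
  obtain ⟨⟨u, v⟩, rfl⟩ := Finsupp.sumFinsuppEquivProdFinsupp.symm.surjective m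
  refine ⟨u, v, ?_, ?_⟩ <;>
  simp [Finsupp.sumFinsuppEquivProdFinsupp, Finsupp.sumElim_eq_add, rename_monomial, monomial_mul]

end Polynomials

lemma isHomogeneous_det {σ R m : Type*} [CommRing R] [Fintype m] [DecidableEq m]
    {M : Matrix m m (MvPolynomial σ R)} {d : m → ℕ} (hM : ∀ a b, (M a b).IsHomogeneous (d a)) :
    M.det.IsHomogeneous (∑ a, d a) := by
  rw [← Matrix.det_transpose, Matrix.det_apply']
  refine IsHomogeneous.sum _ _ _ fun s _ => ?_
  have hsign : ((Equiv.Perm.sign s : ℤ) : MvPolynomial σ R) = C ((Equiv.Perm.sign s : ℤ) : R) := by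
    simp
  rw [hsign]
  exact (IsHomogeneous.prod _ _ _ fun a _ => hM a (s a)).C_mul _

section DividedDifferences

variable {σ R : Type*} [CommRing R]

/-- `D` is a family of divided differences of `F`, one for each variable: in the polynomial ring
`R[X, Y]`, with `X` the `inl` and `Y` the `inr` variables, `F(X) - F(Y) = ∑ (X_c - Y_c) D_c(X, Y)`,
and `D_c(X, X)` is the partial derivative of `F` with respect to `X_c`. -/
structure IsDividedDifference [Fintype σ] (F : MvPolynomial σ R)
    (D : σ → MvPolynomial (σ ⊕ σ) R) : Prop where
  rename_sub_rename : rename Sum.inl F - rename Sum.inr F =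
    ∑ c, (X (Sum.inl c) - X (Sum.inr c)) * D c
  rename_diagonal (c : σ) : rename (Sum.elim id id) (D c) = pderiv c F

namespace IsDividedDifference

variable [Fintype σ] {F G : MvPolynomial σ R} {D E : σ → MvPolynomial (σ ⊕ σ) R}

lemma const (r : R) : IsDividedDifference (C r : MvPolynomial σ R) 0 where
  rename_sub_rename := by simp
  rename_diagonal c := by simp

lemma var [DecidableEq σ] (i : σ) :
    IsDividedDifference (X i : MvPolynomial σ R) (Pi.single i 1) where
  rename_sub_rename := by simp [Pi.single_apply]
  rename_diagonal c := by
    obtain rfl | hc := eq_or_ne c i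
    · simp
    · simp [hc, pderiv_X_of_ne hc.symm]

lemma add (hF : IsDividedDifference F D) (hG : IsDividedDifference G E) :
    IsDividedDifference (F + G) (D + E) where
  rename_sub_rename := by
    simp only [map_add, Pi.add_apply, mul_add, Finset.sum_add_distrib]
    linear_combination hF.rename_sub_rename + hG.rename_sub_rename
  rename_diagonal c := by simp [hF.rename_diagonal, hG.rename_diagonal]

lemma mul (hF : IsDividedDifference F D) (hG : IsDividedDifference G E) :
    IsDividedDifference (F * G) fun c => rename Sum.inl F * E c + D c * rename Sum.inr G where
  rename_sub_rename := by
    have hsum : ∑ c, (X (Sum.inl c) - X (Sum.inr c)) *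
          (rename Sum.inl F * E c + D c * rename Sum.inr G) =
        rename Sum.inl F * (∑ c, (X (Sum.inl c) - X (Sum.inr c)) * E c) +
          (∑ c, (X (Sum.inl c) - X (Sum.inr c)) * D c) * rename Sum.inr G := by
      rw [Finset.mul_sum, Finset.sum_mul, ← Finset.sum_add_distrib]
      exact Finset.sum_congr rfl fun c _ => by ring
    rw [hsum, ← hF.rename_sub_rename, ← hG.rename_sub_rename, map_mul, map_mul]
    ring
  rename_diagonal c := by
    simp only [map_add, map_mul, rename_rename, Sum.elim_comp_inl, Sum.elim_comp_inr,
      rename_id_apply, hF.rename_diagonal, hG.rename_diagonal, pderiv_mul]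
    ring

protected lemma homogeneousComponent {d : ℕ} (h : IsDividedDifference F D)
    (hF : F.IsHomogeneous (d + 1)) :
    IsDividedDifference F fun c => homogeneousComponent d (D c) where
  rename_sub_rename := by
    have hlin (c : σ) : (X (Sum.inl c) - X (Sum.inr c) : MvPolynomial (σ ⊕ σ) R).IsHomogeneous 1 :=
      (isHomogeneous_X R _).sub (isHomogeneous_X R _)
    rw [← homogeneousComponent_eq_self
      ((hF.rename_isHomogeneous (f := Sum.inl)).sub (hF.rename_isHomogeneous (f := Sum.inr))),
      h.rename_sub_rename, map_sum, add_comm]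
    simp only [homogeneousComponent_add_mul (hlin _)]
  rename_diagonal c := by
    rw [rename_homogeneousComponent, h.rename_diagonal]
    exact homogeneousComponent_eq_self hF.pderiv

lemma aeval_sub_aeval {A : Type*} [CommRing A] [Algebra R A] (h : IsDividedDifference F D)
    (x y : σ → A) :
    aeval x F - aeval y F = ∑ c, (x c - y c) * aeval (Sum.elim x y) (D c) := by
  simpa [aeval_rename, Sum.elim_comp_inl, Sum.elim_comp_inr] using
    congrArg (aeval (Sum.elim x y)) h.rename_sub_rename

lemma aeval_diagonal {A : Type*} [CommRing A] [Algebra R A] (h : IsDividedDifference F D)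
    (x : σ → A) (c : σ) :
    aeval (Sum.elim x x) (D c) = aeval x (pderiv c F) := by
  rw [← h.rename_diagonal, aeval_rename, Sum.comp_elim, Function.comp_id]

end IsDividedDifference

variable [Fintype σ]

lemma exists_isDividedDifference (F : MvPolynomial σ R) : ∃ D, IsDividedDifference F D := by
  classical
  induction F using MvPolynomial.induction_on with
  | C r => exact ⟨0, IsDividedDifference.const r⟩
  | add _ _ hF hG => exact ⟨_, hF.choose_spec.add hG.choose_spec⟩
  | mul_X _ i hF => exact ⟨_, hF.choose_spec.mul (.var i)⟩

lemma exists_isDividedDifference_isHomogeneous {F : MvPolynomial σ R} {d : ℕ}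
    (hF : F.IsHomogeneous d) :
    ∃ D, IsDividedDifference F D ∧ ∀ c, (D c).IsHomogeneous (d - 1) := by
  cases d with
  | zero =>
    obtain ⟨r, rfl⟩ : ∃ r, F = C r :=
      ⟨_, totalDegree_eq_zero_iff_eq_C.mp ((totalDegree_zero_iff_isHomogeneous σ).mpr hF)⟩
    exact ⟨0, IsDividedDifference.const r, fun _ => isHomogeneous_zero _ _ _⟩
  | succ d =>
    obtain ⟨D, hD⟩ := exists_isDividedDifference F
    exact ⟨_, hD.homogeneousComponent hF, fun c => homogeneousComponent_isHomogeneous d (D c)⟩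

end DividedDifferences

section Bezoutian

variable {R : Type*} [CommRing R] {n : ℕ}

/-- The Bezoutian of polynomials `F_1, …, F_n` in `X_0, …, X_n` with divided differences `D_1, …,
D_n`: the determinant of the divided differences with respect to `X_1, …, X_n`. It is a polynomial
in two sets of variables whose restriction to the diagonal is the Jacobian minor of the `F_a`. -/
noncomputable def bezoutian (D : Fin n → Fin (n + 1) → MvPolynomial (Fin (n + 1) ⊕ Fin (n + 1)) R) :
    MvPolynomial (Fin (n + 1) ⊕ Fin (n + 1)) R :=
  Matrix.det (Matrix.of fun a b : Fin n => D a b.succ)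

lemma isHomogeneous_bezoutian
    {D : Fin n → Fin (n + 1) → MvPolynomial (Fin (n + 1) ⊕ Fin (n + 1)) R} {d : Fin n → ℕ}
    (hD : ∀ a c, (D a c).IsHomogeneous (d a)) : (bezoutian D).IsHomogeneous (∑ a, d a) :=
  isHomogeneous_det fun a b => hD a b.succ

lemma aeval_bezoutian_eq_zero {A : Type*} [CommRing A] [IsDomain A] [Algebra R A]
    {F : Fin n → MvPolynomial (Fin (n + 1)) R}
    {D : Fin n → Fin (n + 1) → MvPolynomial (Fin (n + 1) ⊕ Fin (n + 1)) R}
    (hD : ∀ a, IsDividedDifference (F a) (D a))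
    {x y : Fin (n + 1) → A} (hxy : x ≠ y) (h0 : x 0 = y 0)
    (hF : ∀ a, aeval x (F a) = aeval y (F a)) :
    aeval (Sum.elim x y) (bezoutian D) = 0 := by
  rw [bezoutian, AlgHom.map_det, ← Matrix.exists_mulVec_eq_zero_iff]
  refine ⟨fun b => x b.succ - y b.succ, fun hzero => hxy (funext fun c => ?_), funext fun a => ?_⟩
  · cases c using Fin.cases with
    | zero => exact h0
    | succ b => exact sub_eq_zero.mp (congrFun hzero b)
  · have hsum := (hD a).aeval_sub_aeval x y
    rw [hF, sub_self, Fin.sum_univ_succ, h0, sub_self, zero_mul, zero_add] at hsum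
    simp only [Matrix.mulVec, dotProduct, AlgHom.mapMatrix_apply, Matrix.map_apply, Matrix.of_apply,
      Pi.zero_apply]
    rw [hsum]
    exact Finset.sum_congr rfl fun b _ => mul_comm _ _

lemma aeval_bezoutian_diagonal {K : Type} [Field K] {F : Fin n → MvPolynomial (Fin (n + 1)) K}
    {D : Fin n → Fin (n + 1) → MvPolynomial (Fin (n + 1) ⊕ Fin (n + 1)) K}
    (hD : ∀ a, IsDividedDifference (F a) (D a)) (x : Fin (n + 1) → K) :
    aeval (Sum.elim x x) (bezoutian D) = aeval x (ZeroDimScheme.jacMinor F) := by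
  rw [bezoutian, ZeroDimScheme.jacMinor, AlgHom.map_det, AlgHom.map_det]
  congr 1
  ext a b
  exact (hD a).aeval_diagonal x b.succ

end Bezoutian

lemma exists_algEquiv_toLinearMap_eq {K A : Type*} [Field K] [CommRing A] [Algebra K A]
    (hA : Module.finrank K A = 1) {τ : A →ₗ[K] K} (hτ : τ 1 = 1) :
    ∃ e : A ≃ₐ[K] K, e.toLinearMap = τ := by
  have hbij : Function.Bijective (Algebra.ofId K A) :=
    Algebra.finrank_eq_one_iff_bijective_algebraMap.mp hA
  refine ⟨(AlgEquiv.ofBijective _ hbij).symm, LinearMap.ext fun x => ?_⟩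
  obtain ⟨r, rfl⟩ := hbij.surjective x
  simp [Algebra.ofId_apply, Algebra.algebraMap_eq_smul_one, hτ]

namespace ZeroDimScheme

variable {K : Type} [Field K] {n : ℕ} (S : ZeroDimScheme K n)

section GradedPieces

lemma V_eq_top_of_rX_le {i : ℕ} (hi : S.rX ≤ i) : S.V i = ⊤ := by
  have hne : {r : ℕ | ∀ i, r ≤ i → S.HF i = S.degX}.Nonempty := by
    obtain ⟨N, hN⟩ := S.eventually_surj
    exact ⟨N, fun i hi => by rw [HF, V, hN i hi, degX, finrank_top]⟩
  exact Submodule.eq_top_of_finrank_eq (Nat.sInf_mem hne i hi)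

variable {S}

lemma germ_mem_V {F : MvPolynomial (Fin (n + 1)) K} {i : ℕ} (hF : F.IsHomogeneous i) :
    S.germ F ∈ S.V i :=
  ⟨F, hF, rfl⟩

lemma exists_isHomogeneous_germ_eq (x : S.Gamma) {i : ℕ} (hi : S.rX ≤ i) :
    ∃ F : MvPolynomial (Fin (n + 1)) K, F.IsHomogeneous i ∧ S.germ F = x := by
  have hx : x ∈ S.V i := by simp [S.V_eq_top_of_rX_le hi]
  exact hx

lemma mul_mem_V {p q : ℕ} {x y : S.Gamma} (hx : x ∈ S.V p) (hy : y ∈ S.V q) :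
    x * y ∈ S.V (p + q) := by
  obtain ⟨F, hF, rfl⟩ := hx
  obtain ⟨G, hG, rfl⟩ := hy
  exact ⟨F * G, IsHomogeneous.mul hF hG, map_mul S.germ F G⟩

lemma V_mono {p q : ℕ} (hpq : p ≤ q) : S.V p ≤ S.V q := fun x hx => by
  have hX : S.germ (X 0 ^ (q - p)) ∈ S.V (q - p) := germ_mem_V (isHomogeneous_X_pow 0 _)
  simpa [S.germ_X0, Nat.sub_add_cancel hpq] using mul_mem_V hX hx

lemma V_le_Vz {p : ℕ} {m : ℤ} (hpm : p ≤ m) : S.V p ≤ S.Vz m := by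
  rw [Vz, if_pos (by omega)]
  exact V_mono (by omega)

lemma mul_mem_Vz {d : ℕ} {m : ℤ} {x w : S.Gamma} (hx : x ∈ S.V d) (hw : w ∈ S.Vz m) :
    x * w ∈ S.Vz (d + m) := by
  by_cases hm : 0 ≤ m
  · rw [Vz, if_pos hm] at hw
    exact V_le_Vz (by omega) (mul_mem_V hx hw)
  · rw [Vz, if_neg hm, Submodule.mem_bot] at hw
    rw [hw, mul_zero]
    exact zero_mem _

variable {τ : ∀ j, (S.pt j).carrier →ₗ[K] K}

lemma mem_Cmod_iff {k : ℤ} {g : S.Gamma} :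
    g ∈ S.Cmod τ k ↔ ∀ i : ℕ, k + i < 0 → ∀ x ∈ S.V i, S.Ttot τ (g * x) = 0 := by
  simp [Cmod]

lemma mem_delta_iff {i : ℤ} {x : S.Gamma} :
    x ∈ S.delta τ i ↔ ∀ k, ∀ g ∈ S.Cmod τ k, x * g ∈ S.Vz (i + k) := by
  simp [delta]

lemma mul_mem_delta {d : ℕ} {i : ℤ} {x w : S.Gamma} (hx : x ∈ S.V d) (hw : w ∈ S.delta τ i) :
    x * w ∈ S.delta τ (d + i) := by
  rw [mem_delta_iff] at hw ⊢
  intro k g hg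
  rw [mul_assoc, add_assoc]
  exact mul_mem_Vz hx (hw k g hg)

end GradedPieces

section VanishingIdeal

attribute [local instance] MvPolynomial.gradedAlgebra

variable {S}

lemma germ_eq_zero_of_mem_IX {F : MvPolynomial (Fin (n + 1)) K} (hF : F ∈ S.IX) :
    S.germ F = 0 := by
  have hle : S.IX ≤ RingHom.ker S.germ := Ideal.span_le.mpr fun G hG => hG.2
  exact hle hF

lemma germ_homogeneousComponent_eq_zero_of_mem_IX {F : MvPolynomial (Fin (n + 1)) K}
    (hF : F ∈ S.IX) (i : ℕ) : S.germ (homogeneousComponent i F) = 0 := by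
  have hhom : S.IX.IsHomogeneous (homogeneousSubmodule (Fin (n + 1)) K) :=
    Ideal.homogeneous_span _ _ fun G hG => hG.1
  exact germ_eq_zero_of_mem_IX (homogeneousComponent_mem_of_mem hhom hF i)

end VanishingIdeal

section DedekindIdeal

variable (τ : ∀ j, (S.pt j).carrier →ₗ[K] K)

/-- The preimage in `P` of the Dedekind different: the polynomials each of whose homogeneous
components has its germ in the component of the Dedekind different of the same degree. -/
def dedekindIdeal : Ideal (MvPolynomial (Fin (n + 1)) K) where
  carrier := {f | ∀ i : ℕ, S.germ (homogeneousComponent i f) ∈ S.delta τ i}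
  add_mem' hf hg i := by
    simpa only [map_add] using add_mem (hf i) (hg i)
  zero_mem' i := by
    simp only [map_zero, zero_mem]
  smul_mem' h f hf i := by
    rw [smul_eq_mul, homogeneousComponent_mul_eq_sum_antidiagonal, map_sum]
    refine sum_mem fun ab hab => ?_
    rw [map_mul, ← Finset.HasAntidiagonal.mem_antidiagonal.mp hab, Nat.cast_add]
    exact mul_mem_delta (germ_mem_V (homogeneousComponent_isHomogeneous _ _)) (hf ab.2)

variable {S τ}

lemma mem_dedekindIdeal_iff_of_isHomogeneous {F : MvPolynomial (Fin (n + 1)) K} {i : ℕ}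
    (hF : F.IsHomogeneous i) : F ∈ S.dedekindIdeal τ ↔ S.germ F ∈ S.delta τ i := by
  refine ⟨fun h => by simpa only [homogeneousComponent_eq_self hF] using h i, fun h k => ?_⟩
  rw [homogeneousComponent_of_mem hF]
  split_ifs with hk
  · rwa [hk]
  · rw [map_zero]
    exact zero_mem _

lemma IX_le_dedekindIdeal : S.IX ≤ S.dedekindIdeal τ := fun F hF i => by
  rw [germ_homogeneousComponent_eq_zero_of_mem_IX hF]
  exact zero_mem _

end DedekindIdeal

section JacobianMinors

lemma isHomogeneous_jacMinor {F : Fin n → MvPolynomial (Fin (n + 1)) K} {d : Fin n → ℕ}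
    (hF : ∀ a, (F a).IsHomogeneous (d a)) : (jacMinor F).IsHomogeneous (∑ a, (d a - 1)) :=
  isHomogeneous_det fun a _ => (hF a).pderiv

lemma jacMinor_eq_sum_homogeneousComponent (F : Fin n → MvPolynomial (Fin (n + 1)) K) :
    jacMinor F = ∑ d ∈ Fintype.piFinset fun a => Finset.range ((F a).totalDegree + 1),
      jacMinor fun a => homogeneousComponent (d a) (F a) := by
  have hrow (a : Fin n) : (fun b : Fin n => pderiv b.succ (F a)) =
      ∑ k ∈ Finset.range ((F a).totalDegree + 1),
        fun b : Fin n => pderiv b.succ (homogeneousComponent k (F a)) := by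
    ext1 b
    rw [Finset.sum_apply, ← map_sum, sum_homogeneousComponent]
  calc
    jacMinor F = Matrix.detRowAlternating.toMultilinearMap
        fun a (b : Fin n) => pderiv b.succ (F a) := rfl
    _ = _ := by
      rw [funext hrow]
      exact MultilinearMap.map_sum_finset _ _ _

end JacobianMinors

section RationalPoints

variable (e : ∀ j, (S.pt j).carrier ≃ₐ[K] K)

/-- The homogeneous coordinates, normalized by `p_{j,0} = 1`, of the `j`-th point of a reduced
scheme with rational points, each local ring being identified with `K` through `e`. -/
noncomputable def point (j : Fin S.s) : Fin (n + 1) → K := fun c => e j (S.germ (X c) j)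

/-- The linear map `∑_{u, v} c_{u v} X^u Y^v ↦ ∑_{u, v} c_{u v} σ(g x^v) x^u`, i.e. the partial
application of the trace form `σ(g · -)` to the second set of variables. Its value at `p_j` is
computed here as the sum of `g(p_l) H(p_j, p_l)` over `l`. -/
noncomputable def contract (g : S.Gamma) :
    MvPolynomial (Fin (n + 1) ⊕ Fin (n + 1)) K →ₗ[K] S.Gamma :=
  LinearMap.pi fun j => (e j).symm.toLinearMap ∘ₗ
    ∑ l, e l (g l) • (aeval (Sum.elim (S.point e j) (S.point e l))).toLinearMap

variable {S}

lemma aeval_point (F : MvPolynomial (Fin (n + 1)) K) (j : Fin S.s) :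
    aeval (S.point e j) F = e j (S.germ F j) := by
  have h : aeval (S.point e j) =
      ((e j : (S.pt j).carrier →ₐ[K] K).comp (Pi.evalAlgHom K _ j)).comp S.germ := by
    ext c
    simp [point]
  rw [h]
  rfl

lemma point_zero (j : Fin S.s) : S.point e j 0 = 1 := by
  simp [point, S.germ_X0]

lemma point_injective : Function.Injective (S.point e) := fun j k hjk => by
  obtain ⟨f, -, hf⟩ := exists_isHomogeneous_germ_eq (Pi.single j 1 : S.Gamma) le_rfl
  by_contra hne
  have heval := congrArg (fun x => aeval x f) hjk
  simp [aeval_point, hf, Pi.single_eq_of_ne (Ne.symm hne)] at heval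

lemma map_contract_apply (g : S.Gamma) (H : MvPolynomial (Fin (n + 1) ⊕ Fin (n + 1)) K)
    (j : Fin S.s) :
    e j (S.contract e g H j) =
      ∑ l, e l (g l) * aeval (Sum.elim (S.point e j) (S.point e l)) H := by
  simp [contract]

lemma Ttot_mul_eq_sum (g x : S.Gamma) :
    S.Ttot (fun j => (e j).toLinearMap) (g * x) = ∑ l, e l (g l) * e l (x l) := by
  simp [Ttot]

lemma contract_rename_mul (g : S.Gamma) (F G : MvPolynomial (Fin (n + 1)) K) :
    S.contract e g (rename Sum.inl F * rename Sum.inr G) =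
      S.Ttot (fun j => (e j).toLinearMap) (g * S.germ G) • S.germ F := by
  ext j
  apply (e j).injective
  rw [map_contract_apply, Pi.smul_apply, map_smul, Ttot_mul_eq_sum, smul_eq_mul, Finset.sum_mul]
  refine Finset.sum_congr rfl fun l _ => ?_
  simp only [map_mul, aeval_rename, Sum.elim_comp_inl, Sum.elim_comp_inr, aeval_point]
  ring

lemma contract_mem_Vz {g : S.Gamma} {k : ℤ} (hg : g ∈ S.Cmod (fun j => (e j).toLinearMap) k)
    {H : MvPolynomial (Fin (n + 1) ⊕ Fin (n + 1)) K} {N : ℕ} (hH : H.IsHomogeneous N) :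
    S.contract e g H ∈ S.Vz (N + k) := by
  rw [H.as_sum, map_sum]
  refine sum_mem fun m hm => ?_
  obtain ⟨u, v, huv, hmon⟩ := exists_monomial_eq_rename_inl_mul_rename_inr m (coeff m H)
  have hN : u.degree + v.degree = N := by
    rw [huv, Finsupp.degree_eq_weight_one]
    exact hH (mem_support_iff.mp hm)
  rw [hmon, contract_rename_mul]
  by_cases hkv : k + v.degree < 0
  · rw [mem_Cmod_iff.mp hg _ hkv _ (germ_mem_V (isHomogeneous_monomial 1 rfl)), zero_smul]
    exact zero_mem _
  · exact Submodule.smul_mem _ _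
      (V_le_Vz (by omega) (germ_mem_V (isHomogeneous_monomial _ rfl)))

lemma contract_bezoutian {F : Fin n → MvPolynomial (Fin (n + 1)) K}
    {D : Fin n → Fin (n + 1) → MvPolynomial (Fin (n + 1) ⊕ Fin (n + 1)) K}
    (hD : ∀ a, IsDividedDifference (F a) (D a)) (hF : ∀ a, S.germ (F a) = 0) (g : S.Gamma) :
    S.contract e g (bezoutian D) = S.germ (jacMinor F) * g := by
  have hvanish (a : Fin n) (j : Fin S.s) : aeval (S.point e j) (F a) = 0 := by
    simp [aeval_point, hF]
  ext j
  apply (e j).injective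
  rw [map_contract_apply, Finset.sum_eq_single_of_mem j (Finset.mem_univ j)]
  · rw [aeval_bezoutian_diagonal hD, aeval_point, mul_comm, Pi.mul_apply, map_mul]
  · intro l _ hl
    rw [aeval_bezoutian_eq_zero hD ((point_injective e).ne hl.symm)
      (by rw [point_zero, point_zero]) (fun a => by rw [hvanish, hvanish]), mul_zero]

lemma germ_jacMinor_mem_delta {F : Fin n → MvPolynomial (Fin (n + 1)) K} {d : Fin n → ℕ}
    (hF : ∀ a, (F a).IsHomogeneous (d a)) (hF0 : ∀ a, S.germ (F a) = 0) :
    S.germ (jacMinor F) ∈ S.delta (fun j => (e j).toLinearMap) (∑ a, (d a - 1) : ℕ) := by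
  choose D hD hDhom using fun a => exists_isDividedDifference_isHomogeneous (hF a)
  refine mem_delta_iff.mpr fun k g hg => ?_
  rw [← contract_bezoutian e hD hF0 g]
  exact contract_mem_Vz e hg (isHomogeneous_bezoutian hDhom)

lemma jacMinor_mem_dedekindIdeal {F : Fin n → MvPolynomial (Fin (n + 1)) K}
    (hF : ∀ a, F a ∈ S.IX) : jacMinor F ∈ S.dedekindIdeal fun j => (e j).toLinearMap := by
  rw [jacMinor_eq_sum_homogeneousComponent]
  refine sum_mem fun d _ => ?_
  have hhom (a : Fin n) := homogeneousComponent_isHomogeneous (d a) (F a)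
  rw [mem_dedekindIdeal_iff_of_isHomogeneous (isHomogeneous_jacMinor hhom)]
  exact germ_jacMinor_mem_delta e hhom
    fun a => germ_homogeneousComponent_eq_zero_of_mem_IX (hF a) (d a)

lemma kaehlerIdeal_le_dedekindIdeal :
    S.KaehlerIdeal ≤ S.dedekindIdeal fun j => (e j).toLinearMap := by
  refine sup_le IX_le_dedekindIdeal (Ideal.span_le.mpr ?_)
  rintro _ ⟨F, hF, rfl⟩
  exact jacMinor_mem_dedekindIdeal e hF

lemma thetaPiece_le_delta (i : ℕ) :
    S.thetaPiece i ≤ S.delta (fun j => (e j).toLinearMap) i := by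
  rintro _ ⟨F, ⟨hF, hFi⟩, rfl⟩
  exact (mem_dedekindIdeal_iff_of_isHomogeneous hFi).mp (kaehlerIdeal_le_dedekindIdeal e hF)

section Separators

variable {j : Fin S.s} {f : MvPolynomial (Fin (n + 1)) K}

/-- The linear forms `X_a - p_{j,a} X_0`, for `1 ≤ a ≤ n`, which generate the vanishing ideal of
the `j`-th point. -/
noncomputable def pointForm (j : Fin S.s) (a : Fin n) : MvPolynomial (Fin (n + 1)) K :=
  X a.succ - C (S.point e j a.succ) * X 0

lemma isHomogeneous_pointForm (j : Fin S.s) (a : Fin n) : (pointForm e j a).IsHomogeneous 1 :=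
  (isHomogeneous_X K _).sub (isHomogeneous_C_mul_X _ _)

lemma aeval_point_pointForm (j : Fin S.s) (a : Fin n) :
    aeval (S.point e j) (pointForm e j a) = 0 := by
  simp [pointForm, point_zero]

lemma pderiv_pointForm (j : Fin S.s) (a b : Fin n) :
    pderiv b.succ (pointForm e j a) = if a = b then 1 else 0 := by
  simp [pointForm, pderiv_X, Pi.single_apply]

lemma pointForm_mul_mem_IX (hf : f.IsHomogeneous S.rX) (hfj : S.germ f = Pi.single j 1)
    (a : Fin n) : pointForm e j a * f ∈ S.IX := by
  refine Ideal.subset_span ⟨⟨_, (isHomogeneous_pointForm e j a).mul hf⟩, ?_⟩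
  ext k
  apply (e k).injective
  obtain rfl | hk := eq_or_ne k j
  · rw [← aeval_point, map_mul, aeval_point_pointForm, zero_mul, Pi.zero_apply, map_zero]
  · simp [hfj, hk]

lemma aeval_jacMinor_pointForm_mul (k : Fin S.s) :
    aeval (S.point e k) (jacMinor fun a => pointForm e j a * f) =
      Matrix.det (e k (S.germ f k) • 1 + Matrix.vecMulVec
        (fun a => aeval (S.point e k) (pointForm e j a))
        (fun b => aeval (S.point e k) (pderiv b.succ f)) : Matrix (Fin n) (Fin n) K) := by
  rw [jacMinor, AlgHom.map_det]
  congr 1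
  ext a b
  obtain rfl | hab := eq_or_ne a b
  · simp [pderiv_pointForm, Matrix.vecMulVec_apply, ← aeval_point, add_comm]
  · simp [pderiv_pointForm, Matrix.vecMulVec_apply, hab]

lemma germ_jacMinor_pointForm_mul [Nontrivial (Fin n)] (hfj : S.germ f = Pi.single j 1) :
    S.germ (jacMinor fun a => pointForm e j a * f) = Pi.single j 1 := by
  ext k
  apply (e k).injective
  -- The linear forms vanish at `p_j`, where the matrix is the identity; at the other points `f`
  -- vanishes and the matrix has rank at most one.
  rw [← aeval_point, aeval_jacMinor_pointForm_mul, hfj]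
  obtain rfl | hk := eq_or_ne k j
  · have hforms : (fun a => aeval (S.point e k) (pointForm e k a)) = 0 :=
      funext (aeval_point_pointForm e k)
    rw [hforms, Matrix.zero_vecMulVec, add_zero]
    simp
  · simp [hk, Matrix.det_vecMulVec]

end Separators

end RationalPoints

section KaehlerPieces

variable {S}

lemma thetaPiece_mono {p q : ℕ} (hpq : p ≤ q) : S.thetaPiece p ≤ S.thetaPiece q := by
  rintro _ ⟨F, ⟨hF, hFp⟩, rfl⟩
  refine ⟨X 0 ^ (q - p) * F, ⟨Ideal.mul_mem_left _ _ hF, ?_⟩, by simp [S.germ_X0]⟩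
  have hmul := (isHomogeneous_X_pow (R := K) 0 (q - p)).mul hFp
  rwa [Nat.sub_add_cancel hpq] at hmul

lemma single_one_mem_thetaPiece (e : ∀ j, (S.pt j).carrier ≃ₐ[K] K) (hn : 2 ≤ n) (j : Fin S.s) :
    (Pi.single j 1 : S.Gamma) ∈ S.thetaPiece (n * S.rX) := by
  have := Fin.nontrivial_iff_two_le.mpr hn
  obtain ⟨f, hf, hfj⟩ := exists_isHomogeneous_germ_eq (Pi.single j 1 : S.Gamma) le_rfl
  refine ⟨_, ⟨Ideal.mem_sup_right (Ideal.subset_span ⟨_, pointForm_mul_mem_IX e hf hfj, rfl⟩), ?_⟩,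
    germ_jacMinor_pointForm_mul e hfj⟩
  simpa using isHomogeneous_jacMinor fun a => (isHomogeneous_pointForm e j a).mul hf

lemma thetaPiece_eq_top (e : ∀ j, (S.pt j).carrier ≃ₐ[K] K) (hn : 2 ≤ n) {i : ℕ}
    (hi : n * S.rX ≤ i) : S.thetaPiece i = ⊤ := by
  refine eq_top_iff.mpr fun x _ => ?_
  have hx : x = ∑ j, e j (x j) • (Pi.single j 1 : S.Gamma) := by
    conv_lhs => rw [← Finset.univ_sum_single x]
    refine Finset.sum_congr rfl fun j _ => ?_
    rw [← Pi.single_smul]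
    congr 1
    exact (e j).injective (by simp)
  rw [hx]
  exact sum_mem fun j _ =>
    Submodule.smul_mem _ _ (thetaPiece_mono hi (single_one_mem_thetaPiece e hn j))

end KaehlerPieces

end ZeroDimScheme

/-- Corollary 2.8.  Let `𝕏 = {p_1, …, p_s} ⊆ ℙ²_K` be a set of
distinct `K`-rational points, none on `Z(X₀)`, with Dedekind different `δ_𝕏` taken
with respect to the canonical trace map.  If `𝕏` has minimal Dedekind different, then
the Dedekind different equals the Kähler different: `δ_𝕏 = ϑ_𝕏` (degreewise, as
homogeneous ideals of `R`). -/
theorem dedekind_CB_stmt4 (K : Type) [Field K] (S : ZeroDimScheme K 2)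
    (hrat : ∀ j, Module.finrank K (S.pt j).carrier = 1)
    (τ : ∀ j, (S.pt j).carrier →ₗ[K] K) (hτ : S.IsTraceFamily τ)
    (hτ1 : ∀ j, τ j 1 = 1)
    (hmin : S.MinimalDedekind τ) :
    ∀ i : ℕ, S.delta τ i = S.thetaPiece i := by
  choose e he using fun j => exists_algEquiv_toLinearMap_eq (hrat j) (hτ1 j)
  obtain rfl : (fun j => (e j).toLinearMap) = τ := funext he
  intro i
  refine le_antisymm ?_ (ZeroDimScheme.thetaPiece_le_delta e i)
  rw [hmin i]
  split_ifs with hi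
  · rw [ZeroDimScheme.thetaPiece_eq_top e le_rfl (by exact_mod_cast hi)]
  · exact bot_le
end

section
/- Let 𝕏 ⊆ ℙ^n_K be a 0-dimensional scheme and 0 ≤ d ≤ r_𝕏 − 1. Then the following are equivalent: (a) 𝕏 has CBP(d); (b) for every maximal p_j-subscheme 𝕐 ⊆ 𝕏 and every standard set of separators {f_{j1},…,f_{jκ_j}} of 𝕐 in 𝕏, there exists k ∈ {1,…,κ_j} with x_0^{r_𝕏−d} ∤ f_{jk}; (c) for every p_j ∈ Supp(𝕏), every maximal p_j-subscheme 𝕐 ⊆ 𝕏 satisfies dim_K (I_{𝕐/𝕏})_d < κ_j. -/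
/-!
For a nonzero socle element `s_j`, the map `a ↦ (0, …, a s_j, …, 0)` has kernel `𝔪_{𝕏,p_j}`, so its
image `U`, the ideal of `Γ` cutting out `𝕐`, is a `K`-vector space of dimension `κ_j` spanned by the
germs of any standard set of separators. Since `x₀` has germ `1`, the subspaces `R_i ⊆ Γ` increase
with `i`, so `μ_{𝕐/𝕏} ≤ d` says that `U ⊆ R_d`. Hence each of the three conditions says that
`U ⊈ R_d` for every maximal subscheme `𝕐`.
-/

theorem exists_ne_zero_forall_mem_mul_eq_zero_of_isNilpotent {A : Type*} [CommSemiring A]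
    [Nontrivial A] {I : Ideal A} (hI : IsNilpotent I) : ∃ x ≠ 0, ∀ b ∈ I, x * b = 0 := by
  obtain ⟨x, hx, hx0⟩ := Submodule.exists_mem_ne_zero_of_ne_bot (pow_pred_nilpotencyClass hI)
  refine ⟨x, hx0, fun b hb ↦ ?_⟩
  have hxb : x * b ∈ I ^ (nilpotencyClass I - 1 + 1) := by
    rw [pow_succ]
    exact Ideal.mul_mem_mul hx hb
  rwa [Nat.sub_add_cancel (pos_nilpotencyClass_iff.2 hI), pow_nilpotencyClass hI] at hxb

theorem mem_maximalIdeal_of_mul_eq_zero {A : Type*} [CommSemiring A] [IsLocalRing A] {a x : A}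
    (hx : x ≠ 0) (hax : a * x = 0) : a ∈ IsLocalRing.maximalIdeal A :=
  (IsLocalRing.mem_maximalIdeal a).2 fun ha ↦ hx (ha.mul_right_eq_zero.1 hax)

theorem mem_ideal_span_pi_single_iff {ι : Type*} [DecidableEq ι] {A : ι → Type*}
    [∀ i, Semiring (A i)] (j : ι) (x : A j) (y : ∀ i, A i) :
    y ∈ Ideal.span {Pi.single j x} ↔ ∃ a, Pi.single j (a * x) = y := by
  rw [Ideal.mem_span_singleton']
  constructor
  · rintro ⟨f, rfl⟩
    exact ⟨f j, Pi.single_mul_right x⟩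
  · rintro ⟨a, rfl⟩
    exact ⟨Pi.single j a, (Pi.single_mul j a x).symm⟩

theorem range_eq_span_range_of_span_mkQ_eq_top {R M N ι : Type*} [Ring R] [AddCommGroup M]
    [AddCommGroup N] [Module R M] [Module R N] {p : Submodule R M} (f : M →ₗ[R] N)
    (hp : p ≤ LinearMap.ker f) {e : ι → M}
    (he : Submodule.span R (Set.range fun k ↦ p.mkQ (e k)) = ⊤) :
    LinearMap.range f = Submodule.span R (Set.range fun k ↦ f (e k)) := by
  rw [← Submodule.range_liftQ p f hp, LinearMap.range_eq_map, ← he, Submodule.map_span,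
    ← Set.range_comp]
  rfl

theorem finrank_inf_lt_finrank_right_iff {k W : Type*} [DivisionRing k] [AddCommGroup W]
    [Module k W] (p q : Submodule k W) [FiniteDimensional k q] :
    Module.finrank k ↥(p ⊓ q) < Module.finrank k q ↔ ¬ q ≤ p := by
  refine ⟨fun hlt hle ↦ ?_, fun hle ↦ Submodule.finrank_lt_finrank_of_lt (inf_lt_right.2 hle)⟩
  rw [inf_eq_right.2 hle] at hlt
  exact hlt.false

namespace ZeroDimScheme

variable {K : Type} [Field K] {n : ℕ} (S : ZeroDimScheme K n)

theorem V_mono_s5 : Monotone S.V := by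
  refine monotone_nat_of_le_succ fun i ↦ ?_
  rintro _ ⟨F, hF, rfl⟩
  refine ⟨F * MvPolynomial.X 0, hF.mul (MvPolynomial.isHomogeneous_X K 0), ?_⟩
  change S.germ (F * MvPolynomial.X 0) = S.germ F
  rw [map_mul, S.germ_X0, mul_one]

theorem exists_forall_mem_V : ∃ N, ∀ x, x ∈ S.V N :=
  S.eventually_surj.imp fun N hN ↦ Submodule.eq_top_iff'.1 (hN N le_rfl)

theorem mu_le_iff (j : Fin S.s) (a : (S.pt j).carrier) (d : ℕ) :
    S.mu j a ≤ d ↔ (Pi.single j a : S.Gamma) ∈ S.V d := by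
  obtain ⟨N, hN⟩ := S.exists_forall_mem_V
  have hne : {i | (Pi.single j a : S.Gamma) ∈ S.V i}.Nonempty := ⟨N, hN _⟩
  have hmu : (Pi.single j a : S.Gamma) ∈ S.V (S.mu j a) := Nat.sInf_mem hne
  exact ⟨fun hd ↦ S.V_mono_s5 hd hmu, fun hd ↦ Nat.sInf_le hd⟩

/-- The `K`-linear map `𝒪_{𝕏,p_j} → Γ`, `a ↦ (0, …, 0, a s_j, 0, …, 0)`, whose values are the germs
of the separators of the maximal `p_j`-subscheme given by the socle element `s_j`. -/
def sepMap (j : Fin S.s) (sj : (S.pt j).carrier) : (S.pt j).carrier →ₗ[K] S.Gamma :=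
  LinearMap.single K (fun i ↦ (S.pt i).carrier) j ∘ₗ LinearMap.mulRight K sj

theorem sepMap_apply (j : Fin S.s) (sj a : (S.pt j).carrier) :
    S.sepMap j sj a = Pi.single j (a * sj) := rfl

theorem range_sepMap (j : Fin S.s) (sj : (S.pt j).carrier) :
    LinearMap.range (S.sepMap j sj) = S.sepIdeal j sj := by
  ext x
  rw [sepIdeal, Submodule.restrictScalars_mem, mem_ideal_span_pi_single_iff]
  rfl

theorem sepIdeal_le_V_iff (j : Fin S.s) (sj : (S.pt j).carrier) (d : ℕ) :
    S.sepIdeal j sj ≤ S.V d ↔ ∀ a, (Pi.single j (a * sj) : S.Gamma) ∈ S.V d := by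
  rw [← range_sepMap, LinearMap.range_le_iff_comap, Submodule.eq_top_iff']
  rfl

theorem muY_le_iff (j : Fin S.s) (sj : (S.pt j).carrier) (d : ℕ) :
    S.muY j sj ≤ d ↔ S.sepIdeal j sj ≤ S.V d := by
  obtain ⟨N, hN⟩ := S.exists_forall_mem_V
  have hbdd : BddAbove {m | ∃ a, a * sj ≠ 0 ∧ m = S.mu j (a * sj)} := by
    refine ⟨N, ?_⟩
    rintro _ ⟨a, -, rfl⟩
    exact (S.mu_le_iff j _ N).2 (hN _)
  rw [muY, csSup_le_iff' hbdd, sepIdeal_le_V_iff]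
  constructor
  · intro hle a
    by_cases ha : a * sj = 0
    · rw [ha, Pi.single_zero]
      exact zero_mem _
    · exact (S.mu_le_iff j _ d).1 (hle _ ⟨a, ha, rfl⟩)
  · rintro hmem _ ⟨a, -, rfl⟩
    exact (S.mu_le_iff j _ d).2 (hmem a)

theorem exists_isSocle_ne_zero (j : Fin S.s) : ∃ sj, S.IsSocle j sj ∧ sj ≠ 0 := by
  have : IsArtinianRing (S.pt j).carrier := IsArtinianRing.of_finite K _
  have hnil : IsNilpotent (IsLocalRing.maximalIdeal (S.pt j).carrier) :=
    IsLocalRing.jacobson_eq_maximalIdeal (⊥ : Ideal (S.pt j).carrier) bot_ne_top ▸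
      IsArtinianRing.isNilpotent_jacobson_bot
  obtain ⟨sj, hne, hsoc⟩ := exists_ne_zero_forall_mem_mul_eq_zero_of_isNilpotent hnil
  exact ⟨sj, hsoc, hne⟩

theorem lt_degP_iff (j : Fin S.s) (d : ℕ) :
    d < S.degP j ↔ ∀ sj, S.IsSocle j sj → sj ≠ 0 → d < S.muY j sj := by
  obtain ⟨s₀, hsoc₀, hne₀⟩ := S.exists_isSocle_ne_zero j
  -- Without a nonzero socle element, `S.degP j` would be the junk value `sInf ∅ = 0`.
  have hnonempty : {m | ∃ sj, S.IsSocle j sj ∧ sj ≠ 0 ∧ m = S.muY j sj}.Nonempty :=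
    ⟨_, s₀, hsoc₀, hne₀, rfl⟩
  rw [← Nat.succ_le_iff, degP, le_csInf_iff'' hnonempty]
  constructor
  · exact fun hle sj hsoc hne ↦ hle _ ⟨sj, hsoc, hne, rfl⟩
  · rintro hlt _ ⟨sj, hsoc, hne, rfl⟩
    exact hlt sj hsoc hne

theorem cbp_iff_not_sepIdeal_le_V (d : ℕ) :
    S.CBP d ↔ ∀ j sj, S.IsSocle j sj → sj ≠ 0 → ¬ S.sepIdeal j sj ≤ S.V d := by
  simp only [CBP, Nat.succ_le_iff, lt_degP_iff, ← muY_le_iff, not_le]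

section Socle

variable {S} {j : Fin S.s} {sj : (S.pt j).carrier}

theorem maximalIdeal_le_ker_sepMap (hsoc : S.IsSocle j sj) :
    (IsLocalRing.maximalIdeal (S.pt j).carrier).restrictScalars K ≤
      LinearMap.ker (S.sepMap j sj) := fun a ha ↦ by
  rw [LinearMap.mem_ker, sepMap_apply, mul_comm, hsoc a ha, Pi.single_zero]

theorem ker_sepMap (hsoc : S.IsSocle j sj) (hne : sj ≠ 0) :
    LinearMap.ker (S.sepMap j sj) =
      (IsLocalRing.maximalIdeal (S.pt j).carrier).restrictScalars K := by
  refine le_antisymm (fun a ha ↦ ?_) (maximalIdeal_le_ker_sepMap hsoc)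
  rw [LinearMap.mem_ker, sepMap_apply, Pi.single_eq_zero_iff] at ha
  exact mem_maximalIdeal_of_mul_eq_zero hne ha

theorem finrank_sepIdeal (hsoc : S.IsSocle j sj) (hne : sj ≠ 0) :
    Module.finrank K (S.sepIdeal j sj) = S.kappa j := by
  rw [← range_sepMap, kappa, ← ker_sepMap hsoc hne]
  exact (S.sepMap j sj).quotKerEquivRange.finrank_eq.symm

theorem sepIdeal_eq_span_of_span_resQ_eq_top (hsoc : S.IsSocle j sj) {ι : Type*}
    {e : ι → (S.pt j).carrier} (he : Submodule.span K (Set.range fun k ↦ S.resQ j (e k)) = ⊤) :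
    S.sepIdeal j sj = Submodule.span K (Set.range fun k ↦ Pi.single j (e k * sj)) := by
  rw [← range_sepMap]
  exact range_eq_span_range_of_span_mkQ_eq_top (S.sepMap j sj) (maximalIdeal_le_ker_sepMap hsoc) he

end Socle

theorem exists_isResidueBasis (j : Fin S.s) :
    ∃ e : Fin (S.kappa j) → (S.pt j).carrier, S.IsResidueBasis j e := by
  let b := Module.finBasis K ((S.pt j).carrier ⧸
    (IsLocalRing.maximalIdeal (S.pt j).carrier).restrictScalars K)
  have hsurj : Function.Surjective (S.resQ j) := Submodule.mkQ_surjective _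
  choose g hg using hsurj
  refine ⟨fun k ↦ g (b k), ?_⟩
  simp only [IsResidueBasis, hg]
  exact ⟨b.linearIndependent, b.span_eq⟩

theorem cbp_iff_exists_single_notMem_V (d : ℕ) :
    S.CBP d ↔ ∀ (j : Fin S.s) (sj : (S.pt j).carrier), S.IsSocle j sj → sj ≠ 0 →
      ∀ e : Fin (S.kappa j) → (S.pt j).carrier, S.IsResidueBasis j e →
        ∃ k, (Pi.single j (e k * sj) : S.Gamma) ∉ S.V d := by
  rw [cbp_iff_not_sepIdeal_le_V]
  refine forall₄_congr fun j sj hsoc _ ↦ ?_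
  have hiff (e : Fin (S.kappa j) → (S.pt j).carrier) (he : S.IsResidueBasis j e) :
      ¬ S.sepIdeal j sj ≤ S.V d ↔ ∃ k, (Pi.single j (e k * sj) : S.Gamma) ∉ S.V d := by
    rw [sepIdeal_eq_span_of_span_resQ_eq_top hsoc he.2, Submodule.span_le,
      Set.range_subset_iff, not_forall]
    rfl
  obtain ⟨e₀, he₀⟩ := S.exists_isResidueBasis j
  exact ⟨fun hle e he ↦ (hiff e he).1 hle, fun hsep ↦ (hiff e₀ he₀).2 (hsep e₀ he₀)⟩

theorem cbp_iff_finrank_IY_lt_kappa (d : ℕ) :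
    S.CBP d ↔ ∀ (j : Fin S.s) (sj : (S.pt j).carrier), S.IsSocle j sj → sj ≠ 0 →
      Module.finrank K (S.IY j sj d) < S.kappa j := by
  rw [cbp_iff_not_sepIdeal_le_V]
  refine forall₄_congr fun j sj hsoc hne ↦ ?_
  rw [← finrank_sepIdeal hsoc hne, IY, finrank_inf_lt_finrank_right_iff]

end ZeroDimScheme

/-- Proposition 4.3 / `propSec3.3`.  Let `𝕏 ⊆ ℙⁿ_K` be a
0-dimensional scheme and `0 ≤ d ≤ r_𝕏 - 1`.  Then the following are equivalent:
(a) `𝕏` has `CBP(d)`;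
(b) for every maximal `p_j`-subscheme `𝕐 ⊆ 𝕏` (socle element `sj`) and every
standard set of separators `{f_{j1}, …, f_{jκ_j}}` of `𝕐` in `𝕏` (determined by a
system `e` of residue representatives forming a basis of `κ(p_j)`), there is a `k`
with `x₀^{r_𝕏 - d} ∤ f_{jk}`; since `f_{jk}` is homogeneous of degree `r_𝕏` with
germ `Pi.single j (e k * sj)`, non-divisibility by `x₀^{r_𝕏-d}` says exactly that
this germ does not lie in `V d ≅ R_d`;
(c) for all `p_j ∈ Supp 𝕏`, every maximal `p_j`-subscheme `𝕐 ⊆ 𝕏` satisfies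
`dim_K (I_{𝕐/𝕏})_d < κ_j`. -/
theorem dedekind_CB_stmt5 (K : Type) [Field K] (n : ℕ) (S : ZeroDimScheme K n)
    (d : ℕ) (hd : d + 1 ≤ S.rX) :
    (S.CBP d ↔
      ∀ (j : Fin S.s) (sj : (S.pt j).carrier), S.IsSocle j sj → sj ≠ 0 →
        ∀ e : Fin (S.kappa j) → (S.pt j).carrier, S.IsResidueBasis j e →
          ∃ k : Fin (S.kappa j), (Pi.single j (e k * sj) : S.Gamma) ∉ S.V d) ∧
    (S.CBP d ↔
      ∀ (j : Fin S.s) (sj : (S.pt j).carrier), S.IsSocle j sj → sj ≠ 0 →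
        Module.finrank K (S.IY j sj d) < S.kappa j) :=
  ⟨S.cbp_iff_exists_single_notMem_V d, S.cbp_iff_finrank_IY_lt_kappa d⟩
end
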